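/- Let d ≥ 1 and k ≥ 1 be integers, let h = (h₁,…,h_d) satisfy 0 < h₁ ≤ ⋯ ≤ h_d ≤ 1, and let p ∈ P_h. Then sup_{t ≥ 0} |p⁽ᵏ⁾(t)| ≤ ( Σ_{j=0}^{k} 8ʲ · C(d−1, j) · C(k, j) / C(2j, j) ) · sup_{t ≥ 0} |p(t)|, where C(n, r) denotes the binomial coefficient (so terms with j > d−1 vanish because C(d−1, j) = 0). -/

import Mathlib

/-- The sup of `|p|` over the half-line `[0, ∞)`. -/
noncomputable def supAbs (p : ℝ → ℝ) : ℝ :=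
  sSup ((fun t => |p t|) '' Set.Ici (0 : ℝ))

/-- The space `P_h` of exponential polynomials with exponents `h₁ ≤ ⋯ ≤ h_d`:
the span of the functions `t^m * exp (-h i * t)`, where `m` is the number of
indices `j < i` with `h j = h i`. -/
def expPoly (d : ℕ) (h : Fin d → ℝ) : Set (ℝ → ℝ) :=
  {p | ∃ c : Fin d → ℝ, ∀ t : ℝ,
      p t = ∑ i : Fin d,
        c i * t ^ (Nat.card {j : Fin d // j < i ∧ h j = h i}) * Real.exp (-(h i) * t)}

/-!
By translation it suffices to bound `|p⁽ᵏ⁾(0)|` by the values of `p` on `[0, ∞)`. The exponential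
polynomials with exponents `h` form the kernel of `∏ (D + hᵢ)`, and a product of `n` factors `D + a`
applied to `f` equals, at some point, a combination of the values of `f` at `n + 1` given nodes with
coefficients of strictly alternating signs. Together with Rolle's theorem on the half-line this
shows that, among functions in the kernel taking values of alternating sign at `d` given nodes,
`(-1)ᵏ f⁽ᵏ⁾(0)` increases with the absolute value at each node and with each exponent. The extremal
case is therefore that of all exponents equal to `1`.

The comparison function is `f(t) = exp (-t) L_{d-1}^{(-1/2)}(2t)`, normalised to be `1` at `0`. The
Sonin function `f² + t f'² / (R - t)` of its differential equation is increasing on `[0, R)`, so the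
values of `f` at its critical points, which together with `0` serve as nodes, are at least `1` in
absolute value. Expanding `f⁽ᵏ⁾(0)` gives the constant.
-/

namespace MarkovBernstein

open Filter Set Polynomial
open scoped ContDiff Topology

section Calculus

variable {p p' : ℝ → ℝ}

theorem hasDerivAt_exp_mul_mul {x y : ℝ} (hp : HasDerivAt p y x) (w : ℝ) :
    HasDerivAt (fun t => Real.exp (w * t) * p t) (Real.exp (w * x) * (y + w * p x)) x := by
  have hexp : HasDerivAt (fun t => Real.exp (w * t)) (Real.exp (w * x) * (w * 1)) x :=
    ((hasDerivAt_id x).const_mul w).exp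
  exact (hexp.mul hp).congr_deriv (by ring)

theorem exists_deriv_add_mul_eq_weighted_sub (hp : ∀ t, HasDerivAt p (p' t) t) (w : ℝ) {a b : ℝ}
    (hab : a < b) :
    ∃ c ∈ Ioo a b, ∃ A > 0, ∃ B > 0, p' c + w * p c = A * p b - B * p a := by
  have hder := fun x => hasDerivAt_exp_mul_mul (hp x) w
  obtain ⟨c, hc, hslope⟩ := exists_hasDerivAt_eq_slope _ _ hab
    (fun x _ => (hder x).continuousAt.continuousWithinAt) (fun x _ => hder x)
  have hba : 0 < b - a := sub_pos.2 hab
  refine ⟨c, hc, Real.exp (w * b) / ((b - a) * Real.exp (w * c)), by positivity,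
    Real.exp (w * a) / ((b - a) * Real.exp (w * c)), by positivity, ?_⟩
  field_simp at hslope ⊢
  linarith

theorem eventually_lt_of_tendsto_deriv_add_mul (hp : ∀ t, HasDerivAt p (p' t) t) {a : ℝ}
    (ha : 0 < a) (hlim : Tendsto (fun t => p' t + a * p t) atTop (𝓝 0)) {ε : ℝ} (hε : 0 < ε) :
    ∀ᶠ t in atTop, p t < ε := by
  have hδ : 0 < ε / 2 := half_pos hε
  obtain ⟨T, hT⟩ := eventually_atTop.1 (hlim.eventually_lt_const (mul_pos ha hδ))
  have hder := fun t => hasDerivAt_exp_mul_mul ((hp t).sub_const (ε / 2)) a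
  have hanti : AntitoneOn (fun t => Real.exp (a * t) * (p t - ε / 2)) (Ici T) := by
    refine antitoneOn_of_hasDerivWithinAt_nonpos (convex_Ici T)
      (fun t _ => (hder t).continuousAt.continuousWithinAt)
      (fun t _ => (hder t).hasDerivWithinAt) (fun t ht => ?_)
    have := hT t (interior_subset ht)
    exact mul_nonpos_of_nonneg_of_nonpos (Real.exp_pos _).le (by linarith)
  have hexp : Tendsto (fun t => Real.exp (-(a * t)) * (Real.exp (a * T) * (p T - ε / 2)))
      atTop (𝓝 0) := by
    simpa using (Real.tendsto_exp_neg_atTop_nhds_zero.comp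
      (tendsto_id.const_mul_atTop ha)).mul_const (Real.exp (a * T) * (p T - ε / 2))
  filter_upwards [hexp.eventually_lt_const hδ, eventually_ge_atTop T] with t hsmall hTt
  have hle := mul_le_mul_of_nonneg_left (hanti self_mem_Ici hTt hTt) (Real.exp_pos (-(a * t))).le
  rw [← mul_assoc, ← Real.exp_add, neg_add_cancel, Real.exp_zero, one_mul] at hle
  linarith

theorem tendsto_zero_of_tendsto_deriv_add_mul (hp : ∀ t, HasDerivAt p (p' t) t) {a : ℝ}
    (ha : 0 < a) (hlim : Tendsto (fun t => p' t + a * p t) atTop (𝓝 0)) :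
    Tendsto p atTop (𝓝 0) := by
  have hneg : Tendsto (fun t => -p' t + a * -p t) atTop (𝓝 0) := by
    simpa [neg_add_rev, add_comm] using hlim.neg
  rw [Metric.tendsto_nhds]
  intro ε hε
  filter_upwards [eventually_lt_of_tendsto_deriv_add_mul hp ha hlim hε,
    eventually_lt_of_tendsto_deriv_add_mul (fun t => (hp t).neg) ha hneg hε] with t hlt hgt
  rw [Real.dist_eq, sub_zero, abs_lt]
  exact ⟨by simpa using neg_lt_neg hgt, hlt⟩

theorem exists_gt_deriv_eq_zero_of_tendsto_zero (hp : Continuous p)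
    (hlim : Tendsto p atTop (𝓝 0)) {a : ℝ} (ha : p a = 0) : ∃ c > a, deriv p c = 0 := by
  by_cases hzero : ∀ s > a, p s = 0
  · refine ⟨a + 1, by simp, ?_⟩
    have hev : p =ᶠ[𝓝 (a + 1)] fun _ => 0 := by
      filter_upwards [Ioi_mem_nhds (lt_add_one a)] using hzero
    simp [hev.deriv_eq]
  push Not at hzero
  obtain ⟨s, has, hs⟩ := hzero
  wlog hspos : 0 < p s generalizing p
  · obtain ⟨c, hc, hderiv⟩ := this (p := fun t => -p t) hp.neg (by simpa using hlim.neg)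
      (by simp [ha]) (by simpa)
      (by simpa using lt_of_le_of_ne (not_lt.1 hspos) hs)
    exact ⟨c, hc, by simpa [deriv.fun_neg] using hderiv⟩
  obtain ⟨T, hT, hsT⟩ := ((hlim.eventually_lt_const hspos).and (eventually_gt_atTop s)).exists
  obtain ⟨c, hc, hmax⟩ := isCompact_Icc.exists_isMaxOn (nonempty_Icc.2 (has.trans hsT).le)
    hp.continuousOn
  have hsc : p s ≤ p c := hmax ⟨has.le, hsT.le⟩
  have hac : a < c := lt_of_le_of_ne hc.1 (by rintro rfl; linarith)
  have hcT : c < T := lt_of_le_of_ne hc.2 (by rintro rfl; linarith)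
  exact ⟨c, hac, (hmax.isLocalMax (Icc_mem_nhds hac hcT)).deriv_eq_zero⟩

theorem exists_interlacing_deriv_zeros (hp : Continuous p) (hlim : Tendsto p atTop (𝓝 0)) {n : ℕ}
    {z : Fin n → ℝ} (hz : StrictMono z) (hzero : ∀ i, p (z i) = 0) :
    ∃ y : Fin n → ℝ, StrictMono y ∧ (∀ i, deriv p (y i) = 0) ∧ (∀ i, z i < y i) ∧
      ∀ i j, i < j → y i < z j := by
  have hrolle (i : Fin n) : ∃ c > z i, deriv p c = 0 ∧ ∀ j > i, c < z j := by
    by_cases hi : (i : ℕ) + 1 < n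
    · have hlt : i < ⟨i + 1, hi⟩ := Nat.lt_succ_self i
      obtain ⟨c, hc, hderiv⟩ := exists_deriv_eq_zero (hz hlt) hp.continuousOn
        ((hzero _).trans (hzero _).symm)
      exact ⟨c, hc.1, hderiv, fun j hj => hc.2.trans_le (hz.monotone (Nat.succ_le_of_lt hj))⟩
    · obtain ⟨c, hc, hderiv⟩ := exists_gt_deriv_eq_zero_of_tendsto_zero hp hlim (hzero i)
      exact ⟨c, hc, hderiv, fun j hj => by omega⟩
  choose y hzy hderiv hyz using hrolle
  exact ⟨y, fun i j hij => (hyz i j hij).trans (hzy j), hderiv, hzy, fun i j hij => hyz i j hij⟩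

theorem bddAbove_abs_image_Ici_of_tendsto_zero (hp : Continuous p) (hlim : Tendsto p atTop (𝓝 0))
    (a : ℝ) : BddAbove ((fun t => |p t|) '' Ici a) := by
  obtain ⟨T, hT⟩ := eventually_atTop.1 (hlim.abs.eventually_le_const (by simp : |(0 : ℝ)| < 1))
  obtain ⟨M, hM⟩ := isCompact_Icc.bddAbove_image (f := fun t => |p t|) (K := Icc a T)
    hp.abs.continuousOn
  refine ⟨max M 1, ?_⟩
  rintro _ ⟨t, hat, rfl⟩
  rcases le_total t T with htT | hTt
  · exact le_max_of_le_left (hM ⟨t, ⟨hat, htT⟩, rfl⟩)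
  · exact le_max_of_le_right (hT t hTt)

end Calculus

section DifferentialOperators

/-- The space of smooth real functions, on which constant coefficient differential operators act as
linear endomorphisms. -/
def smoothFun : Submodule ℝ (ℝ → ℝ) where
  carrier := {f | ContDiff ℝ ∞ f}
  add_mem' {f g} (hf : ContDiff ℝ ∞ f) (hg : ContDiff ℝ ∞ g) := hf.add hg
  zero_mem' := (contDiff_const : ContDiff ℝ ∞ fun _ : ℝ => (0 : ℝ))
  smul_mem' c f (hf : ContDiff ℝ ∞ f) := hf.const_smul c

instance : CoeFun smoothFun fun _ => ℝ → ℝ := ⟨Subtype.val⟩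

@[simp] theorem smoothFun.add_apply (f g : smoothFun) (t : ℝ) : (f + g) t = f t + g t := rfl

@[simp] theorem smoothFun.sub_apply (f g : smoothFun) (t : ℝ) : (f - g) t = f t - g t := rfl

@[simp] theorem smoothFun.neg_apply (f : smoothFun) (t : ℝ) : (-f) t = -f t := rfl

@[simp] theorem smoothFun.smul_apply (c : ℝ) (f : smoothFun) (t : ℝ) : (c • f) t = c * f t := rfl

@[simp] theorem smoothFun.zero_apply (t : ℝ) : (0 : smoothFun) t = 0 := rfl

@[simp] theorem smoothFun.sum_apply {ι : Type*} (s : Finset ι) (f : ι → smoothFun) (t : ℝ) :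
    (∑ i ∈ s, f i) t = ∑ i ∈ s, f i t := by
  rw [Submodule.coe_sum, Finset.sum_apply]

theorem smoothFun.ext {f g : smoothFun} (h : ∀ t, f t = g t) : f = g :=
  Subtype.ext (funext h)

theorem smoothFun.contDiff (f : smoothFun) : ContDiff ℝ ∞ f := f.2

theorem smoothFun.differentiable (f : smoothFun) : Differentiable ℝ f :=
  (smoothFun.contDiff f).differentiable (by simp)

theorem smoothFun.continuous (f : smoothFun) : Continuous f :=
  (smoothFun.contDiff f).continuous

/-- Differentiation as an endomorphism of the space of smooth functions. -/
noncomputable def smoothDeriv : Module.End ℝ smoothFun where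
  toFun f := ⟨deriv f, (contDiff_infty_iff_deriv.1 (smoothFun.contDiff f)).2⟩
  map_add' f g := smoothFun.ext fun t =>
    deriv_add (smoothFun.differentiable f t) (smoothFun.differentiable g t)
  map_smul' c f := smoothFun.ext fun t =>
    deriv_const_smul c (smoothFun.differentiable f t)

theorem smoothFun.hasDerivAt (f : smoothFun) (t : ℝ) : HasDerivAt f (smoothDeriv f t) t :=
  (smoothFun.differentiable f t).hasDerivAt

theorem smoothDeriv_pow_apply (k : ℕ) (f : smoothFun) (t : ℝ) :
    (smoothDeriv ^ k) f t = iteratedDeriv k f t := by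
  induction k generalizing f with
  | zero => simp
  | succ k ih => rw [pow_succ, Module.End.mul_apply, ih, iteratedDeriv_succ']; rfl

/-- The constant coefficient differential operator `∏ a ∈ s, (d/dt + a)`. Its kernel is the space
of exponential polynomials with exponents `s`, counted with multiplicity. -/
noncomputable def diffOp (s : Multiset ℝ) : Module.End ℝ smoothFun :=
  aeval smoothDeriv (s.map fun a => X + C a).prod

@[simp] theorem diffOp_zero (f : smoothFun) : diffOp 0 f = f := by
  simp [diffOp]

theorem diffOp_cons (a : ℝ) (s : Multiset ℝ) (f : smoothFun) :
    diffOp (a ::ₘ s) f = smoothDeriv (diffOp s f) + a • diffOp s f := by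
  simp [diffOp, Module.End.mul_apply, Algebra.algebraMap_eq_smul_one]

theorem diffOp_cons' (a : ℝ) (s : Multiset ℝ) (f : smoothFun) :
    diffOp (a ::ₘ s) f = diffOp s (smoothDeriv f + a • f) := by
  rw [diffOp, Multiset.map_cons, Multiset.prod_cons, mul_comm]
  simp [diffOp, Module.End.mul_apply, Algebra.algebraMap_eq_smul_one]

theorem diffOp_smoothDeriv (s : Multiset ℝ) (f : smoothFun) :
    diffOp s (smoothDeriv f) = smoothDeriv (diffOp s f) := by
  simpa using (diffOp_cons' 0 s f).symm.trans (diffOp_cons 0 s f)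

/-- The translate `t ↦ f (t + x)`, which reduces pointwise bounds at `x` to bounds at `0`. -/
def smoothTranslate (x : ℝ) (f : smoothFun) : smoothFun :=
  ⟨fun t => f (t + x), (smoothFun.contDiff f).comp (contDiff_id.add contDiff_const)⟩

theorem smoothDeriv_smoothTranslate (x : ℝ) (f : smoothFun) :
    smoothDeriv (smoothTranslate x f) = smoothTranslate x (smoothDeriv f) :=
  smoothFun.ext fun t => deriv_comp_add_const f x t

theorem diffOp_smoothTranslate (s : Multiset ℝ) (x : ℝ) (f : smoothFun) :
    diffOp s (smoothTranslate x f) = smoothTranslate x (diffOp s f) := by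
  induction s using Multiset.induction_on with
  | empty => simp
  | cons a s ih => rw [diffOp_cons, diffOp_cons, ih, smoothDeriv_smoothTranslate]; rfl

theorem tendsto_zero_of_tendsto_diffOp {s : Multiset ℝ} (hs : ∀ a ∈ s, 0 < a) {f : smoothFun}
    (hf : Tendsto (diffOp s f) atTop (𝓝 0)) : Tendsto f atTop (𝓝 0) := by
  induction s using Multiset.induction_on with
  | empty => simpa using hf
  | cons a s ih =>
    rw [diffOp_cons] at hf
    exact ih (fun b hb => hs b (Multiset.mem_cons_of_mem hb))
      (tendsto_zero_of_tendsto_deriv_add_mul (smoothFun.hasDerivAt (diffOp s f))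
        (hs a (Multiset.mem_cons_self a s)) hf)

theorem tendsto_zero_of_diffOp_eq_zero {s : Multiset ℝ} (hs : ∀ a ∈ s, 0 < a) {f : smoothFun}
    (hf : diffOp s f = 0) : Tendsto f atTop (𝓝 0) :=
  tendsto_zero_of_tendsto_diffOp hs (by rw [hf]; exact tendsto_const_nhds)

theorem exists_smoothDeriv_eq (g : smoothFun) : ∃ f, smoothDeriv f = g := by
  have hder (t : ℝ) : HasDerivAt (fun t => ∫ x in (0 : ℝ)..t, g x) (g t) t :=
    (smoothFun.continuous g).integral_hasStrictDerivAt 0 t |>.hasDerivAt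
  refine ⟨⟨fun t => ∫ x in (0 : ℝ)..t, g x, contDiff_infty_iff_deriv.2
    ⟨fun t => (hder t).differentiableAt, ?_⟩⟩, smoothFun.ext fun t => (hder t).deriv⟩
  simpa only [funext fun t => (hder t).deriv] using smoothFun.contDiff g

end DifferentialOperators

section ExponentialPolynomials

/-- The exponential polynomial `t ↦ q(t) exp (-a t)`, as a linear function of `q`. -/
noncomputable def polyExp (a : ℝ) : ℝ[X] →ₗ[ℝ] smoothFun where
  toFun q := ⟨fun t => q.eval t * Real.exp (-a * t),
    (by simpa using q.contDiff_aeval (𝕜 := ℝ) ∞ : ContDiff ℝ ∞ fun t => q.eval t).mul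
      (contDiff_const.mul contDiff_id).exp⟩
  map_add' p q := smoothFun.ext fun t => by simp [add_mul]
  map_smul' c q := smoothFun.ext fun t => by simp [mul_assoc]

theorem polyExp_apply (a : ℝ) (q : ℝ[X]) (t : ℝ) :
    polyExp a q t = q.eval t * Real.exp (-a * t) := rfl

theorem smoothDeriv_polyExp (a : ℝ) (q : ℝ[X]) :
    smoothDeriv (polyExp a q) = polyExp a (derivative q - a • q) := by
  refine smoothFun.ext fun t => (smoothFun.hasDerivAt _ t).unique ?_
  have hexp : HasDerivAt (fun t => Real.exp (-a * t)) (Real.exp (-a * t) * (-a * 1)) t :=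
    ((hasDerivAt_id t).const_mul (-a)).exp
  exact ((q.hasDerivAt t).mul hexp).congr_deriv (by
    simp only [polyExp_apply, eval_sub, eval_smul, smul_eq_mul]; ring)

theorem smoothDeriv_add_smul_polyExp (a b : ℝ) (q : ℝ[X]) :
    smoothDeriv (polyExp a q) + b • polyExp a q = polyExp a (derivative q + (b - a) • q) := by
  rw [smoothDeriv_polyExp, ← map_smul, ← map_add]
  congr 1
  module

theorem eq_polyExp_of_smoothDeriv_add_smul_eq_zero {a : ℝ} {f : smoothFun}
    (hf : smoothDeriv f + a • f = 0) : f = polyExp a (C (f 0)) := by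
  have hder (t : ℝ) : HasDerivAt (fun t => Real.exp (a * t) * f t) 0 t :=
    (hasDerivAt_exp_mul_mul (smoothFun.hasDerivAt f t) a).congr_deriv (by
      rw [← smoothFun.smul_apply, ← smoothFun.add_apply, hf, smoothFun.zero_apply, mul_zero])
  refine smoothFun.ext fun t => ?_
  have hconst : Real.exp (a * t) * f t = f 0 := by
    simpa using is_const_of_deriv_eq_zero (fun t => (hder t).differentiableAt)
      (fun t => (hder t).deriv) t 0
  rw [polyExp_apply, eval_C, ← hconst, mul_right_comm, ← Real.exp_add]
  simp

theorem exists_diffOp_eq_polyExp {b : ℝ} {s : Multiset ℝ} {f : smoothFun}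
    (hf : diffOp (b ::ₘ s) f = 0) : ∃ c, diffOp s f = polyExp b (C c) := by
  rw [diffOp_cons] at hf
  exact ⟨_, eq_polyExp_of_smoothDeriv_add_smul_eq_zero hf⟩

theorem diffOp_polyExp_eq_zero {s : Multiset ℝ} {a : ℝ} {q : ℝ[X]}
    (hq : q.degree < s.count a) : diffOp s (polyExp a q) = 0 := by
  induction s using Multiset.induction_on generalizing q with
  | empty => simp_all
  | cons b s ih =>
    rw [diffOp_cons', smoothDeriv_add_smul_polyExp]
    refine ih ?_
    rcases eq_or_ne a b with rfl | hab
    · rw [Multiset.count_cons_self] at hq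
      simp only [sub_self, zero_smul, add_zero]
      rcases eq_or_ne q 0 with rfl | hq0
      · simp
      · rw [degree_eq_natDegree hq0, Nat.cast_lt, Nat.lt_succ_iff] at hq
        exact (degree_derivative_lt hq0).trans_le (degree_le_of_natDegree_le hq)
    · rw [Multiset.count_cons_of_ne hab] at hq
      refine (degree_add_le _ _).trans_lt (max_lt ?_ ((degree_smul_le _ _).trans_lt hq))
      exact degree_derivative_le.trans_lt hq

theorem tendsto_polyExp_zero {a : ℝ} (ha : 0 < a) (q : ℝ[X]) :
    Tendsto (polyExp a q) atTop (𝓝 0) := by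
  refine tendsto_zero_of_diffOp_eq_zero (s := .replicate (q.natDegree + 1) a)
    (fun b hb => Multiset.eq_of_mem_replicate hb ▸ ha) (diffOp_polyExp_eq_zero ?_)
  rw [Multiset.count_replicate_self]
  exact degree_le_natDegree.trans_lt (by exact_mod_cast Nat.lt_succ_self _)

theorem exists_smoothDeriv_add_smul_eq (a : ℝ) (g : smoothFun) :
    ∃ f, smoothDeriv f + a • f = g := by
  have hexp (b : ℝ) : ContDiff ℝ ∞ fun t => Real.exp (b * t) :=
    (contDiff_const.mul contDiff_id).exp
  obtain ⟨F, hF⟩ := exists_smoothDeriv_eq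
    ⟨fun t => Real.exp (a * t) * g t, (hexp a).mul (smoothFun.contDiff g)⟩
  refine ⟨⟨fun t => Real.exp (-a * t) * F t, (hexp (-a)).mul (smoothFun.contDiff F)⟩,
    smoothFun.ext fun t => ?_⟩
  have hder := (hasDerivAt_exp_mul_mul (smoothFun.hasDerivAt F t) (-a)).deriv
  have hcancel : Real.exp (-a * t) * Real.exp (a * t) = 1 := by simp [← Real.exp_add]
  change deriv (fun t => Real.exp (-a * t) * F t) t + a * (Real.exp (-a * t) * F t) = g t
  rw [hder, hF]
  linear_combination g t * hcancel

theorem diffOp_surjective (s : Multiset ℝ) : Function.Surjective (diffOp s) := by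
  induction s using Multiset.induction_on with
  | empty => exact fun g => ⟨g, diffOp_zero g⟩
  | cons a s ih =>
    intro g
    obtain ⟨e, he⟩ := exists_smoothDeriv_add_smul_eq a g
    obtain ⟨f, rfl⟩ := ih e
    exact ⟨f, (diffOp_cons a s f).trans he⟩

end ExponentialPolynomials

section DividedDifferences

theorem exists_diffOp_eq_alternating_sum (n : ℕ) {s : Multiset ℝ} (hs : s.card = n)
    (f : smoothFun) {z : Fin (n + 1) → ℝ} (hz : StrictMono z) :
    ∃ ξ, ∃ K : Fin (n + 1) → ℝ, (∀ i, 0 < K i) ∧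
      (-1) ^ n * diffOp s f ξ = ∑ i, K i * ((-1) ^ (i : ℕ) * f (z i)) := by
  induction n generalizing s f with
  | zero =>
    obtain rfl := Multiset.card_eq_zero.1 hs
    exact ⟨z 0, fun _ => 1, fun _ => one_pos, by simp⟩
  | succ n ih =>
    obtain ⟨a, s, rfl, hcard⟩ := Multiset.card_eq_succ_iff.1 hs
    have hmvt (i : Fin (n + 1)) := exists_deriv_add_mul_eq_weighted_sub
      (smoothFun.hasDerivAt f) a (hz i.castSucc_lt_succ)
    choose y hy A hA B hB hAB using hmvt
    have hymono : StrictMono y := Fin.strictMono_iff_lt_succ.2 fun i => by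
      simpa using (hy i.castSucc).2.trans (hy i.succ).1
    obtain ⟨ξ, K, hK, hsum⟩ := ih hcard (smoothDeriv f + a • f) hymono
    have hright (i) : 0 < K i * A i := mul_pos (hK i) (hA i)
    have hcons (i) : 0 ≤ (Fin.cons 0 fun i => K i * A i : Fin (n + 2) → ℝ) i :=
      Fin.cases le_rfl (fun i => (hright i).le) i
    refine ⟨ξ, fun i => (Fin.snoc (fun i => K i * B i) 0 : Fin (n + 2) → ℝ) i +
      (Fin.cons 0 fun i => K i * A i : Fin (n + 2) → ℝ) i, fun i => ?_, ?_⟩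
    · refine Fin.lastCases ?_ (fun i => ?_) i
      · beta_reduce
        rw [Fin.snoc_last, zero_add, ← Fin.succ_last, Fin.cons_succ]
        exact hright _
      · beta_reduce
        rw [Fin.snoc_castSucc]
        exact add_pos_of_pos_of_nonneg (mul_pos (hK i) (hB i)) (hcons _)
    · rw [diffOp_cons', pow_succ, mul_neg_one, neg_mul, hsum]
      simp only [add_mul, Finset.sum_add_distrib]
      rw [Fin.sum_univ_castSucc (n := n + 1), Fin.sum_univ_succ (n := n + 1),
        ← Finset.sum_neg_distrib]
      simp only [smoothFun.add_apply, smoothFun.smul_apply, hAB]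
      simp only [Fin.snoc_castSucc, Fin.snoc_last, Fin.cons_zero, Fin.cons_succ, zero_mul, add_zero,
        zero_add, Fin.val_castSucc, Fin.val_succ, ← Finset.sum_add_distrib]
      exact Finset.sum_congr rfl fun i _ => by ring

theorem exists_diffOp_eq_of_zeros {n : ℕ} {s : Multiset ℝ} (hs : s.card = n) {f : smoothFun}
    {z : Fin (n + 1) → ℝ} (hz : StrictMono z) (j : Fin (n + 1)) (hzero : ∀ i ≠ j, f (z i) = 0) :
    ∃ ξ, ∃ K > 0, (-1) ^ n * diffOp s f ξ = K * ((-1) ^ (j : ℕ) * f (z j)) := by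
  obtain ⟨ξ, K, hK, hsum⟩ := exists_diffOp_eq_alternating_sum n hs f hz
  refine ⟨ξ, K j, hK j, hsum.trans (Fintype.sum_eq_single j fun i hi => ?_)⟩
  rw [hzero i hi, mul_zero, mul_zero]

theorem nonneg_of_zeros_of_diffOp_nonneg {n : ℕ} {s : Multiset ℝ} (hs : s.card = n)
    {f : smoothFun} (hf : ∀ t, 0 ≤ (-1) ^ n * diffOp s f t) {z : Fin n → ℝ} (hz : StrictMono z)
    (hzero : ∀ i, f (z i) = 0) {x : ℝ} (hx : ∀ i, x ≤ z i) : 0 ≤ f x := by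
  by_cases hnode : ∃ i, z i = x
  · obtain ⟨i, rfl⟩ := hnode
    exact (hzero i).ge
  push Not at hnode
  have hmono : StrictMono (Fin.cons x z : Fin (n + 1) → ℝ) :=
    Fin.strictMono_cons.2 ⟨fun i => lt_of_le_of_ne (hx i) (hnode i).symm, hz⟩
  obtain ⟨ξ, K, hK, hξ⟩ := exists_diffOp_eq_of_zeros hs hmono 0
    (f := f) (Fin.cases (by simp) fun i _ => hzero i)
  simp only [Fin.val_zero, pow_zero, one_mul, Fin.cons_zero] at hξ
  exact nonneg_of_mul_nonneg_right (hξ ▸ hf ξ) hK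

theorem exists_interpolant (n : ℕ) {s : Multiset ℝ} (hs : s.card = n) {z : Fin n → ℝ}
    (hz : StrictMono z) (v : Fin n → ℝ) : ∃ f, diffOp s f = 0 ∧ ∀ i, f (z i) = v i := by
  induction n generalizing s with
  | zero => exact ⟨0, map_zero _, fun i => i.elim0⟩
  | succ n ih =>
    obtain ⟨b, s, rfl, hcard⟩ := Multiset.card_eq_succ_iff.1 hs
    have hinit : StrictMono fun i : Fin n => z i.castSucc := hz.comp Fin.strictMono_castSucc
    obtain ⟨e, he⟩ := diffOp_surjective s (polyExp b (C 1))
    obtain ⟨f₀, hf₀, hv⟩ := ih hcard hinit fun i => v i.castSucc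
    obtain ⟨f₁, hf₁, hev⟩ := ih hcard hinit fun i => e (z i.castSucc)
    have hψ : diffOp s (e - f₁) = polyExp b (C 1) := by rw [map_sub, he, hf₁, sub_zero]
    have hzero (i : Fin n) : (e - f₁) (z i.castSucc) = 0 := by simp [hev]
    have hlast : (e - f₁) (z (Fin.last n)) ≠ 0 := by
      intro h
      obtain ⟨ξ, K, -, hξ⟩ := exists_diffOp_eq_of_zeros hcard hz (Fin.last n)
        (f := e - f₁) (Fin.lastCases (by simp) fun i _ => hzero i)
      rw [hψ, h, polyExp_apply] at hξ
      simp at hξ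
    refine ⟨f₀ + ((v (Fin.last n) - f₀ (z (Fin.last n))) / (e - f₁) (z (Fin.last n))) • (e - f₁),
      ?_, Fin.lastCases ?_ fun i => ?_⟩
    · rw [diffOp_cons, map_add, map_smul, hf₀, hψ, zero_add, map_smul, smul_comm, ← smul_add,
        smoothDeriv_add_smul_polyExp]
      simp
    · rw [smoothFun.add_apply, smoothFun.smul_apply, div_mul_cancel₀ _ hlast, add_sub_cancel]
    · rw [smoothFun.add_apply, smoothFun.smul_apply, hzero, mul_zero, add_zero, hv]

end DividedDifferences

section Comparison

variable {n : ℕ} {s : Multiset ℝ} {f g : smoothFun}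

-- Rolle's theorem, with decay at infinity supplying the last zero, passes the hypotheses to `-f'`.
theorem smoothDeriv_pow_nonneg_of_zeros (k : ℕ) (hs : s.card = n) (hpos : ∀ a ∈ s, 0 < a)
    {b c : ℝ} (hb : 0 < b) (hf : diffOp s f = polyExp b (C c)) (hc : 0 ≤ (-1) ^ n * c)
    {z : Fin n → ℝ} (hz : StrictMono z) (hz0 : ∀ i, 0 ≤ z i) (hzero : ∀ i, f (z i) = 0) :
    0 ≤ (-1) ^ k * (smoothDeriv ^ k) f 0 := by
  induction k generalizing f c z with
  | zero =>
    rw [pow_zero, pow_zero, one_mul]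
    refine nonneg_of_zeros_of_diffOp_nonneg hs (fun t => ?_) hz hzero hz0
    rw [hf, polyExp_apply, eval_C, ← mul_assoc]
    exact mul_nonneg hc (Real.exp_pos _).le
  | succ k ih =>
    have hlim : Tendsto f atTop (𝓝 0) :=
      tendsto_zero_of_tendsto_diffOp hpos (hf ▸ tendsto_polyExp_zero hb _)
    obtain ⟨y, hy, hderiv, hzy, -⟩ :=
      exists_interlacing_deriv_zeros (smoothFun.continuous f) hlim hz hzero
    have hneg : diffOp s (-smoothDeriv f) = polyExp b (C (b * c)) := by
      rw [map_neg, diffOp_smoothDeriv, hf, smoothDeriv_polyExp, ← map_neg]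
      simp [smul_eq_C_mul]
    have hle := ih hneg (by rw [mul_left_comm]; positivity) hy
      (fun i => (hz0 i).trans (hzy i).le) fun i => neg_eq_zero.2 (hderiv i)
    rw [map_neg, smoothFun.neg_apply, ← Module.End.mul_apply, ← pow_succ] at hle
    rwa [pow_succ (-1 : ℝ), mul_neg_one, neg_mul, ← mul_neg]

theorem smoothDeriv_pow_nonneg_of_single_node (k : ℕ) (hs : s.card = n + 1)
    (hpos : ∀ a ∈ s, 0 < a) (hf : diffOp s f = 0) {z : Fin (n + 1) → ℝ} (hz : StrictMono z)
    (hz0 : ∀ i, 0 ≤ z i) (j : Fin (n + 1)) (hzero : ∀ i ≠ j, f (z i) = 0)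
    (hj : 0 ≤ (-1) ^ (j : ℕ) * f (z j)) : 0 ≤ (-1) ^ k * (smoothDeriv ^ k) f 0 := by
  obtain ⟨b, s, rfl, hcard⟩ := Multiset.card_eq_succ_iff.1 hs
  rw [Multiset.forall_mem_cons] at hpos
  obtain ⟨c, hc⟩ := exists_diffOp_eq_polyExp hf
  refine smoothDeriv_pow_nonneg_of_zeros k hcard hpos.2 hpos.1 hc ?_
    (hz.comp (Fin.strictMono_succAbove j)) (fun i => hz0 _)
    fun i => hzero _ (Fin.succAbove_ne j i)
  obtain ⟨ξ, K, hK, hξ⟩ := exists_diffOp_eq_of_zeros hcard hz j hzero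
  rw [hc, polyExp_apply, eval_C, ← mul_assoc] at hξ
  exact nonneg_of_mul_nonneg_left (hξ ▸ mul_nonneg hK.le hj) (Real.exp_pos _)

theorem smoothDeriv_pow_apply_zero_eq_zero_of_zeros (k : ℕ) (hs : s.card = n)
    (hpos : ∀ a ∈ s, 0 < a) (hf : diffOp s f = 0) {z : Fin n → ℝ} (hz : StrictMono z)
    (hz0 : ∀ i, 0 ≤ z i) (hzero : ∀ i, f (z i) = 0) : (smoothDeriv ^ k) f 0 = 0 := by
  have hle {f : smoothFun} (hf : diffOp s f = 0) (hzero : ∀ i, f (z i) = 0) :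
      0 ≤ (-1) ^ k * (smoothDeriv ^ k) f 0 :=
    smoothDeriv_pow_nonneg_of_zeros (c := 0) k hs hpos one_pos (by simpa using hf) (by simp) hz
      hz0 hzero
  have hneg := hle (f := -f) (by rw [map_neg, hf, neg_zero]) fun i => by simp [hzero]
  rw [map_neg, smoothFun.neg_apply, mul_neg, neg_nonneg] at hneg
  simpa using le_antisymm hneg (hle hf hzero)

theorem smoothDeriv_pow_nonneg_of_alternating (k : ℕ) (hs : s.card = n + 1)
    (hpos : ∀ a ∈ s, 0 < a) (hf : diffOp s f = 0) {z : Fin (n + 1) → ℝ} (hz : StrictMono z)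
    (hz0 : ∀ i, 0 ≤ z i) (halt : ∀ i : Fin (n + 1), 0 ≤ (-1) ^ (i : ℕ) * f (z i)) :
    0 ≤ (-1) ^ k * (smoothDeriv ^ k) f 0 := by
  choose l hl hlz using fun i => exists_interpolant (n + 1) hs hz (Pi.single i (f (z i)))
  have hrest := smoothDeriv_pow_apply_zero_eq_zero_of_zeros (f := f - ∑ i, l i) k hs hpos
    (by simp [hf, hl]) hz hz0 fun i => by simp [hlz, Finset.sum_pi_single]
  rw [map_sub, smoothFun.sub_apply, sub_eq_zero] at hrest
  rw [hrest, map_sum, smoothFun.sum_apply, Finset.mul_sum]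
  refine Finset.sum_nonneg fun i _ => ?_
  refine smoothDeriv_pow_nonneg_of_single_node k hs hpos (hl i) hz hz0 i (fun j hj => ?_) ?_
  · rw [hlz, Pi.single_eq_of_ne hj]
  · rw [hlz, Pi.single_eq_same]
    exact halt i

theorem smoothDeriv_pow_le_of_exponent_le (k : ℕ) (hs : s.card = n) (hpos : ∀ x ∈ s, 0 < x)
    {a b : ℝ} (ha : 0 < a) (hab : a ≤ b) (hf : diffOp (b ::ₘ s) f = 0)
    (hg : diffOp (a ::ₘ s) g = 0) {z : Fin (n + 1) → ℝ} (hz : StrictMono z)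
    (hz0 : ∀ i, 0 ≤ z i) (halt : ∀ i : Fin (n + 1), 0 ≤ (-1) ^ (i : ℕ) * f (z i))
    (hfg : ∀ i, g (z i) = f (z i)) :
    (-1) ^ k * (smoothDeriv ^ k) g 0 ≤ (-1) ^ k * (smoothDeriv ^ k) f 0 := by
  obtain ⟨c, hc⟩ := exists_diffOp_eq_polyExp hf
  have hdiff : diffOp (a ::ₘ s) (f - g) = polyExp b (C ((a - b) * c)) := by
    rw [map_sub, hg, sub_zero, diffOp_cons, hc, smoothDeriv_add_smul_polyExp]
    simp [smul_eq_C_mul]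
  have hsign : 0 ≤ (-1) ^ n * c := by
    obtain ⟨ξ, K, hK, hξ⟩ := exists_diffOp_eq_alternating_sum n hs f hz
    rw [hc, polyExp_apply, eval_C, ← mul_assoc] at hξ
    exact nonneg_of_mul_nonneg_left
      (hξ ▸ Finset.sum_nonneg fun i _ => mul_nonneg (hK i).le (halt i)) (Real.exp_pos _)
  have hnonneg := smoothDeriv_pow_nonneg_of_zeros k (by simp [hs] : (a ::ₘ s).card = n + 1)
    (Multiset.forall_mem_cons.2 ⟨ha, hpos⟩) (ha.trans_le hab) hdiff ?_ hz hz0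
    fun i => by simp [hfg]
  · rwa [map_sub, smoothFun.sub_apply, mul_sub, sub_nonneg] at hnonneg
  · calc 0 ≤ (b - a) * ((-1) ^ n * c) := mul_nonneg (sub_nonneg.2 hab) hsign
      _ = (-1) ^ (n + 1) * ((a - b) * c) := by ring

theorem smoothDeriv_pow_le_of_replicate (k m : ℕ) {b : ℝ} (hb : 0 < b)
    (hs : s.card + m = n + 1) (hpos : ∀ a ∈ s, 0 < a) (hle : ∀ a ∈ s, a ≤ b)
    (hf : diffOp (.replicate (n + 1) b) f = 0) (hg : diffOp (s + .replicate m b) g = 0)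
    {z : Fin (n + 1) → ℝ} (hz : StrictMono z) (hz0 : ∀ i, 0 ≤ z i)
    (halt : ∀ i : Fin (n + 1), 0 ≤ (-1) ^ (i : ℕ) * f (z i)) (hfg : ∀ i, g (z i) = f (z i)) :
    (-1) ^ k * (smoothDeriv ^ k) g 0 ≤ (-1) ^ k * (smoothDeriv ^ k) f 0 := by
  induction s using Multiset.induction_on generalizing m g with
  | empty =>
    obtain rfl : m = n + 1 := by simpa using hs
    rw [zero_add] at hg
    have heq := smoothDeriv_pow_apply_zero_eq_zero_of_zeros (f := g - f) k
      (Multiset.card_replicate _ _) (fun a ha => Multiset.eq_of_mem_replicate ha ▸ hb)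
      (by rw [map_sub, hg, hf, sub_zero]) hz hz0 fun i => by simp [hfg]
    rw [map_sub, smoothFun.sub_apply, sub_eq_zero] at heq
    exact heq ▸ le_rfl
  | cons a s ih =>
    rw [Multiset.forall_mem_cons] at hpos hle
    rw [Multiset.card_cons] at hs
    have hcard : (s + .replicate m b).card = n := by
      rw [Multiset.card_add, Multiset.card_replicate]; omega
    obtain ⟨g', hg', hgz⟩ := exists_interpolant (n + 1) (s := b ::ₘ (s + .replicate m b))
      (by simp [hcard]) hz fun i => f (z i)
    have hstep := smoothDeriv_pow_le_of_exponent_le k hcard (fun x hx => ?_) hpos.1 hle.1 hg'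
      (by rwa [Multiset.cons_add] at hg) hz hz0 (by simpa only [hgz] using halt)
      fun i => (hfg i).trans (hgz i).symm
    · refine hstep.trans (ih (m + 1) (by omega) hpos.2 hle.2 ?_ hgz)
      rwa [Multiset.replicate_succ, Multiset.add_cons]
    · rcases Multiset.mem_add.1 hx with hx | hx
      · exact hpos.2 x hx
      · exact Multiset.eq_of_mem_replicate hx ▸ hb

theorem abs_smoothDeriv_pow_le_of_alternant (k : ℕ) {b : ℝ} (hs : s.card = n + 1)
    (hpos : ∀ a ∈ s, 0 < a) (hle : ∀ a ∈ s, a ≤ b)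
    (hf : diffOp (.replicate (n + 1) b) f = 0) (hg : diffOp s g = 0)
    {z : Fin (n + 1) → ℝ} (hz : StrictMono z) (hz0 : ∀ i, 0 ≤ z i)
    (halt : ∀ i : Fin (n + 1), 1 ≤ (-1) ^ (i : ℕ) * f (z i)) {M : ℝ} (hM : ∀ i, |g (z i)| ≤ M) :
    |(smoothDeriv ^ k) g 0| ≤ (-1) ^ k * (smoothDeriv ^ k) f 0 * M := by
  obtain ⟨a, ha⟩ : ∃ a, a ∈ s := Multiset.card_pos_iff_exists_mem.1 (by omega)
  have hM0 : 0 ≤ M := (abs_nonneg _).trans (hM 0)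
  obtain ⟨e, he, hez⟩ := exists_interpolant (n + 1) hs hz fun i => f (z i)
  have hef := smoothDeriv_pow_le_of_replicate (s := s) (g := e) k 0
    ((hpos a ha).trans_le (hle a ha)) hs hpos hle hf (by simpa using he) hz hz0
    (fun i => zero_le_one.trans (halt i)) hez
  have hbound {q : smoothFun} (hq : diffOp s q = 0) (hqM : ∀ i, |q (z i)| ≤ M) :
      (-1) ^ k * (smoothDeriv ^ k) q 0 ≤ (-1) ^ k * (smoothDeriv ^ k) f 0 * M := by
    have hdom := smoothDeriv_pow_nonneg_of_alternating (f := M • e - q) k hs hpos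
      (by rw [map_sub, map_smul, he, hq, smul_zero, sub_zero]) hz hz0 fun i => ?_
    · rw [map_sub, map_smul, smoothFun.sub_apply, smoothFun.smul_apply] at hdom
      nlinarith [mul_le_mul_of_nonneg_right hef hM0]
    · have hqi : (-1) ^ (i : ℕ) * q (z i) ≤ M :=
        (le_abs_self _).trans (by simpa [abs_mul] using hqM i)
      rw [smoothFun.sub_apply, smoothFun.smul_apply, hez]
      nlinarith [mul_le_mul_of_nonneg_right (halt i) hM0]
  have hup := hbound hg hM
  have hdown := hbound (q := -g) (by rw [map_neg, hg, neg_zero]) (by simpa using hM)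
  rw [map_neg, smoothFun.neg_apply, mul_neg] at hdown
  have habs : |(smoothDeriv ^ k) g 0| = |(-1) ^ k * (smoothDeriv ^ k) g 0| := by simp [abs_mul]
  exact habs ▸ abs_le'.2 ⟨hup, hdown⟩

end Comparison

section Sonin

variable {f : smoothFun} {R : ℝ}

theorem hasDerivAt_sqrt_mul {g : ℝ → ℝ} {g' x : ℝ} (hg : HasDerivAt g g' x) (hx : 0 < x) :
    HasDerivAt (fun t => √t * g t) ((x * g' + g x / 2) / √x) x := by
  refine ((Real.hasDerivAt_sqrt hx.ne').mul hg).congr_deriv ?_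
  field_simp
  rw [Real.sq_sqrt hx.le]
  ring

theorem monotoneOn_sqrt_mul_mul_smoothDeriv (hR : 0 ≤ R)
    (hode : ∀ t, t * smoothDeriv (smoothDeriv f) t + smoothDeriv f t / 2 = (t - R) * f t) :
    MonotoneOn (fun t => √t * (f t * smoothDeriv f t)) (Ici R) := by
  have hcont : Continuous fun t => √t * (f t * smoothDeriv f t) :=
    Real.continuous_sqrt.mul ((smoothFun.continuous f).mul (smoothFun.continuous _))
  have hpos {t : ℝ} (ht : t ∈ interior (Ici R)) : 0 < t := hR.trans_lt (by simpa using ht)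
  refine monotoneOn_of_hasDerivWithinAt_nonneg (convex_Ici R) hcont.continuousOn
    (fun t ht => (hasDerivAt_sqrt_mul ((smoothFun.hasDerivAt f t).mul
      (smoothFun.hasDerivAt (smoothDeriv f) t)) (hpos ht)).hasDerivWithinAt) fun t ht => ?_
  have henergy : t * (smoothDeriv f t * smoothDeriv f t + f t * smoothDeriv (smoothDeriv f) t) +
      f t * smoothDeriv f t / 2 = t * smoothDeriv f t ^ 2 + (t - R) * f t ^ 2 := by
    linear_combination f t * hode t
  have htR : 0 ≤ t - R := sub_nonneg.2 (interior_subset ht)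
  have ht0 := hpos ht
  simp only [Pi.mul_apply, henergy]
  positivity

theorem monotoneOn_sq_of_smoothDeriv_eq_zero (hR : 0 < R)
    (hode : ∀ t, t * smoothDeriv (smoothDeriv f) t + smoothDeriv f t / 2 = (t - R) * f t) {c : ℝ}
    (hRc : R ≤ c) (hc : smoothDeriv f c = 0) : MonotoneOn (fun t => f t ^ 2) (Ici c) := by
  have hder (t : ℝ) := (smoothFun.hasDerivAt f t).pow 2
  refine monotoneOn_of_hasDerivWithinAt_nonneg (convex_Ici c)
    ((smoothFun.continuous f).pow 2).continuousOn (fun t _ => (hder t).hasDerivWithinAt)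
    fun t ht => ?_
  have hct : c ≤ t := interior_subset ht
  have henergy := monotoneOn_sqrt_mul_mul_smoothDeriv hR.le hode hRc (hRc.trans hct) hct
  simp only [hc, mul_zero] at henergy
  have hprod := nonneg_of_mul_nonneg_right henergy (Real.sqrt_pos.2 (hR.trans_le (hRc.trans hct)))
  simpa [mul_assoc] using hprod

theorem lt_of_smoothDeriv_eq_zero (hR : 0 < R)
    (hode : ∀ t, t * smoothDeriv (smoothDeriv f) t + smoothDeriv f t / 2 = (t - R) * f t)
    (hlim : Tendsto f atTop (𝓝 0)) {c : ℝ} (hc : smoothDeriv f c = 0) (hfc : f c ≠ 0) :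
    c < R := by
  by_contra! hRc
  have hmono := monotoneOn_sq_of_smoothDeriv_eq_zero hR hode hRc hc
  have hle : f c ^ 2 ≤ 0 := by
    refine ge_of_tendsto (by simpa using hlim.pow 2) ?_
    filter_upwards [eventually_ge_atTop c] with t hct using hmono self_mem_Ici hct hct
  exact hle.not_gt (by positivity)

theorem hasDerivAt_sonin
    (hode : ∀ t, t * smoothDeriv (smoothDeriv f) t + smoothDeriv f t / 2 = (t - R) * f t) {t : ℝ}
    (ht : t ≠ R) :
    HasDerivAt (fun t => f t ^ 2 + t * smoothDeriv f t ^ 2 / (R - t))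
      (t * smoothDeriv f t ^ 2 / (R - t) ^ 2) t := by
  have hne : R - t ≠ 0 := sub_ne_zero.2 ht.symm
  have hf' := (smoothFun.hasDerivAt (smoothDeriv f) t).pow 2
  refine (((smoothFun.hasDerivAt f t).pow 2).add
    (((hasDerivAt_id t).mul hf').div ((hasDerivAt_id t).const_sub R) hne)).congr_deriv ?_
  simp only [Pi.mul_apply, Pi.pow_apply, id]
  field_simp
  linear_combination 2 * smoothDeriv f t * (R - t) * hode t

theorem sq_apply_zero_le_of_smoothDeriv_eq_zero
    (hode : ∀ t, t * smoothDeriv (smoothDeriv f) t + smoothDeriv f t / 2 = (t - R) * f t) {c : ℝ}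
    (hc0 : 0 ≤ c) (hcR : c < R) (hc : smoothDeriv f c = 0) : f 0 ^ 2 ≤ f c ^ 2 := by
  have hder {t : ℝ} (ht : t ∈ Icc 0 c) := hasDerivAt_sonin hode (ht.2.trans_lt hcR).ne
  have hmono := monotoneOn_of_hasDerivWithinAt_nonneg (convex_Icc 0 c)
    (fun t ht => (hder ht).continuousAt.continuousWithinAt)
    (fun t ht => (hder (interior_subset ht)).hasDerivWithinAt)
    (fun t ht => div_nonneg (mul_nonneg (interior_subset ht).1 (sq_nonneg _)) (sq_nonneg _))
  simpa [hc] using hmono (left_mem_Icc.2 hc0) (right_mem_Icc.2 hc0) hc0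

end Sonin

section HalfLaguerre

/-- The coefficients `(-2)ʲ / (1/2)ⱼ` of the confluent hypergeometric series `M(-n, 1/2, 2x)`,
without the factor `n.choose j`; here `(1/2)ⱼ = (2j).choose j * j! / 4ʲ`. -/
noncomputable def halfLaguerreCoeff (j : ℕ) : ℝ :=
  (-8) ^ j / (j.centralBinom * j.factorial)

/-- The Laguerre polynomial `L_n^{(-1/2)}(2x)`, normalised to take the value `1` at `0`. -/
noncomputable def halfLaguerre (n : ℕ) : ℝ[X] :=
  ∑ j ∈ Finset.range (n + 1), monomial j (halfLaguerreCoeff j * n.choose j)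

theorem halfLaguerreCoeff_succ (j : ℕ) :
    (2 * j + 1) * halfLaguerreCoeff (j + 1) = -4 * halfLaguerreCoeff j := by
  have hcb : ((j : ℝ) + 1) * (j + 1).centralBinom = 2 * (2 * j + 1) * j.centralBinom := by
    exact_mod_cast Nat.succ_mul_centralBinom_succ j
  have hcb0 : (j.centralBinom : ℝ) ≠ 0 := by exact_mod_cast Nat.centralBinom_ne_zero j
  have hcb1 : ((j + 1).centralBinom : ℝ) ≠ 0 := by
    exact_mod_cast Nat.centralBinom_ne_zero (j + 1)
  have hfac : (j.factorial : ℝ) ≠ 0 := by exact_mod_cast Nat.factorial_ne_zero j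
  rw [halfLaguerreCoeff, halfLaguerreCoeff, Nat.factorial_succ]
  push_cast
  field_simp
  linear_combination (4 * (-8) ^ j) * hcb

theorem coeff_halfLaguerre (n j : ℕ) :
    (halfLaguerre n).coeff j = halfLaguerreCoeff j * n.choose j := by
  rw [halfLaguerre, finsetSum_coeff]
  simp only [coeff_monomial, Finset.sum_ite_eq', Finset.mem_range, ite_eq_left_iff, not_lt]
  intro hj
  rw [Nat.choose_eq_zero_of_lt hj, Nat.cast_zero, mul_zero]

theorem degree_halfLaguerre_lt (n : ℕ) : (halfLaguerre n).degree < (n + 1 : ℕ) := by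
  rw [degree_lt_iff_coeff_zero]
  intro j hj
  rw [coeff_halfLaguerre, Nat.choose_eq_zero_of_lt hj, Nat.cast_zero, mul_zero]

theorem eval_zero_halfLaguerre (n : ℕ) : (halfLaguerre n).eval 0 = 1 := by
  rw [← coeff_zero_eq_eval_zero, coeff_halfLaguerre]
  simp [halfLaguerreCoeff]

theorem succ_mul_cast_choose_succ (n j : ℕ) :
    ((j : ℝ) + 1) * n.choose (j + 1) = (n - j) * n.choose j := by
  rcases le_or_gt j n with hj | hj
  · rw [← Nat.cast_sub hj, mul_comm, mul_comm ((n - j : ℕ) : ℝ)]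
    exact_mod_cast Nat.choose_succ_right_eq n j
  · simp [Nat.choose_eq_zero_of_lt hj, Nat.choose_eq_zero_of_lt (hj.trans j.lt_succ_self)]

theorem halfLaguerre_ode (n : ℕ) :
    C 2 * (X * derivative (derivative (halfLaguerre n))) + derivative (halfLaguerre n) -
      C 4 * (X * derivative (halfLaguerre n)) + C (4 * (n : ℝ)) * halfLaguerre n = 0 := by
  ext j
  have hchoose := succ_mul_cast_choose_succ n j
  have hcoeff := halfLaguerreCoeff_succ j
  cases j with
  | zero =>
    simp only [coeff_add, coeff_sub, coeff_C_mul, coeff_X_mul_zero, coeff_derivative,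
      coeff_halfLaguerre, coeff_zero]
    rw [Nat.choose_zero_right] at hchoose ⊢
    push_cast at hchoose hcoeff ⊢
    linear_combination n * hcoeff + halfLaguerreCoeff 1 * hchoose
  | succ j =>
    simp only [coeff_add, coeff_sub, coeff_C_mul, coeff_X_mul, coeff_derivative,
      coeff_halfLaguerre, coeff_zero]
    push_cast at hchoose hcoeff ⊢
    linear_combination halfLaguerreCoeff (j + 2) * (2 * (j + 1) + 1) * hchoose +
      (n - (j + 1)) * (n.choose (j + 1) : ℝ) * hcoeff

theorem halfLaguerre_succ (n : ℕ) :
    C (2 * (n : ℝ) + 1) * halfLaguerre (n + 1) = C (2 * (n : ℝ) + 1) * halfLaguerre n -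
      C 4 * (X * halfLaguerre n) + C 2 * (X * derivative (halfLaguerre n)) := by
  ext j
  cases j with
  | zero => simp [coeff_halfLaguerre]
  | succ j =>
    simp only [coeff_add, coeff_sub, coeff_C_mul, coeff_X_mul, coeff_derivative,
      coeff_halfLaguerre, Nat.choose_succ_succ]
    push_cast
    linear_combination (n.choose j : ℝ) * halfLaguerreCoeff_succ j -
      2 * halfLaguerreCoeff (j + 1) * succ_mul_cast_choose_succ n j

theorem polyExp_one_halfLaguerre_ode (n : ℕ) (t : ℝ) :
    t * smoothDeriv (smoothDeriv (polyExp 1 (halfLaguerre n))) t +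
      smoothDeriv (polyExp 1 (halfLaguerre n)) t / 2 =
        (t - (2 * n + 1 / 2)) * polyExp 1 (halfLaguerre n) t := by
  have hode := congrArg (eval t) (halfLaguerre_ode n)
  simp only [smoothDeriv_polyExp, polyExp_apply, one_smul, derivative_sub, eval_add, eval_sub,
    eval_mul, eval_C, eval_X, eval_zero] at hode ⊢
  linear_combination Real.exp (-1 * t) / 2 * hode

theorem polyExp_two_halfLaguerre_succ (n : ℕ) (t : ℝ) :
    t * smoothDeriv (smoothDeriv (polyExp 2 (halfLaguerre n))) t +
      smoothDeriv (polyExp 2 (halfLaguerre n)) t / 2 =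
        -(2 * n + 1) * polyExp 2 (halfLaguerre (n + 1)) t := by
  have hode := congrArg (eval t) (halfLaguerre_ode n)
  have hsucc := congrArg (eval t) (halfLaguerre_succ n)
  simp only [smoothDeriv_polyExp, polyExp_apply, derivative_sub, derivative_smul, eval_smul,
    smul_eq_mul, eval_add, eval_sub, eval_mul, eval_C, eval_X, eval_zero] at hode hsucc ⊢
  linear_combination Real.exp (-2 * t) / 2 * hode + Real.exp (-2 * t) * hsucc

theorem tendsto_sqrt_mul_polyExp_zero {a : ℝ} (ha : 0 < a) (q : ℝ[X]) :
    Tendsto (fun t => √t * polyExp a q t) atTop (𝓝 0) := by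
  refine squeeze_zero_norm' ?_ (by simpa using (tendsto_polyExp_zero ha (X * q)).abs)
  filter_upwards [eventually_ge_atTop 1] with t ht
  have ht0 : 0 ≤ t := zero_le_one.trans ht
  have hsqrt : √t ≤ t := Real.sqrt_le_iff.2 ⟨ht0, le_self_pow₀ ht two_ne_zero⟩
  rw [polyExp_apply, polyExp_apply, eval_mul, eval_X, mul_assoc t, Real.norm_eq_abs, abs_mul,
    abs_mul t, abs_of_nonneg (Real.sqrt_nonneg t), abs_of_nonneg ht0]
  gcongr

-- Rolle's theorem is applied to `F = exp (-2t) halfLaguerre n` and then to `√t F'`, whose extra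
-- zero at `0` raises the count by one and whose derivative is a multiple of
-- `exp (-2t) halfLaguerre (n + 1) / √t`.
theorem exists_zeros_halfLaguerre (n : ℕ) :
    ∃ z : Fin n → ℝ, StrictMono z ∧ (∀ i, 0 < z i) ∧ ∀ i, (halfLaguerre n).eval (z i) = 0 := by
  induction n with
  | zero => exact ⟨Fin.elim0, fun i => i.elim0, fun i => i.elim0, fun i => i.elim0⟩
  | succ n ih =>
    obtain ⟨z, hz, hpos, hzero⟩ := ih
    set F := polyExp 2 (halfLaguerre n) with hF
    obtain ⟨y, hy, hderiv, hzy, -⟩ := exists_interlacing_deriv_zeros (smoothFun.continuous F)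
      (tendsto_polyExp_zero two_pos _) hz fun i => by rw [hF, polyExp_apply, hzero, zero_mul]
    have hypos (i) : 0 < y i := (hpos i).trans (hzy i)
    have hcont : Continuous fun t => √t * smoothDeriv F t :=
      Real.continuous_sqrt.mul (smoothFun.continuous _)
    have hlim : Tendsto (fun t => √t * smoothDeriv F t) atTop (𝓝 0) := by
      rw [hF, smoothDeriv_polyExp]
      exact tendsto_sqrt_mul_polyExp_zero two_pos _
    have hroots (i) : √((Fin.cons 0 y : Fin (n + 1) → ℝ) i) *
        smoothDeriv F ((Fin.cons 0 y : Fin (n + 1) → ℝ) i) = 0 :=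
      Fin.cases (by simp) (fun i => mul_eq_zero_of_right _ (hderiv i)) i
    obtain ⟨w, hw, hw', hyw, -⟩ := exists_interlacing_deriv_zeros hcont hlim
      (Fin.strictMono_cons.2 ⟨hypos, hy⟩) hroots
    have hwpos (i) : 0 < w i := (Fin.cases le_rfl (fun j => (hypos j).le) i :
      0 ≤ (Fin.cons 0 y : Fin (n + 1) → ℝ) i).trans_lt (hyw i)
    refine ⟨w, hw, hwpos, fun i => ?_⟩
    have hquot := (hasDerivAt_sqrt_mul (smoothFun.hasDerivAt (smoothDeriv F) (w i))
      (hwpos i)).deriv.symm.trans (hw' i)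
    rw [hF, polyExp_two_halfLaguerre_succ, polyExp_apply] at hquot
    have hne : -(2 * n + 1 : ℝ) ≠ 0 := neg_ne_zero.2 (by positivity)
    have hsqrt : √(w i) ≠ 0 := (Real.sqrt_pos.2 (hwpos i)).ne'
    rw [div_eq_zero_iff, or_iff_left hsqrt] at hquot
    exact (mul_eq_zero.1 ((mul_eq_zero.1 hquot).resolve_left hne)).resolve_right
      (Real.exp_ne_zero _)

end HalfLaguerre

section Extremal

theorem alternating_pos_of_zeros {n : ℕ} {b : ℝ} {s : Multiset ℝ} (hs : s.card = n)
    {f : smoothFun} (hf : diffOp (b ::ₘ s) f = 0) {z : Fin n → ℝ} (hzero : ∀ i, f (z i) = 0)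
    {i j : Fin (n + 1)} {x y : ℝ} (hx : StrictMono (i.insertNth x z : Fin (n + 1) → ℝ))
    (hy : StrictMono (j.insertNth y z : Fin (n + 1) → ℝ)) (hfx : 0 < (-1) ^ (i : ℕ) * f x) :
    0 < (-1) ^ (j : ℕ) * f y := by
  obtain ⟨c, hc⟩ := exists_diffOp_eq_polyExp hf
  have hvalue {i : Fin (n + 1)} {x : ℝ} (hx : StrictMono (i.insertNth x z : Fin (n + 1) → ℝ)) :
      ∃ ξ, ∃ K > 0, (-1) ^ n * c * Real.exp (-b * ξ) = K * ((-1) ^ (i : ℕ) * f x) := by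
    obtain ⟨ξ, K, hK, hξ⟩ := exists_diffOp_eq_of_zeros (f := f) hs hx i fun j hj => by
      obtain ⟨l, rfl⟩ := Fin.exists_succAbove_eq hj
      rw [Fin.insertNth_apply_succAbove, hzero]
    rw [hc, polyExp_apply, eval_C, ← mul_assoc, Fin.insertNth_apply_same] at hξ
    exact ⟨ξ, K, hK, hξ⟩
  obtain ⟨ξ, K, hK, hξ⟩ := hvalue hx
  obtain ⟨η, L, hL, hη⟩ := hvalue hy
  have hsign : 0 < (-1) ^ n * c :=
    (mul_pos_iff_of_pos_right (Real.exp_pos _)).1 (hξ ▸ mul_pos hK hfx)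
  exact (mul_pos_iff_of_pos_left hL).1 (hη ▸ mul_pos hsign (Real.exp_pos _))

theorem diffOp_polyExp_halfLaguerre (n : ℕ) (a : ℝ) :
    diffOp (.replicate (n + 1) a) (polyExp a (halfLaguerre n)) = 0 :=
  diffOp_polyExp_eq_zero (by rw [Multiset.count_replicate_self]; exact degree_halfLaguerre_lt n)

theorem one_le_sq_polyExp_halfLaguerre_of_smoothDeriv_eq_zero (n : ℕ) {c : ℝ} (hc0 : 0 ≤ c)
    (hc : smoothDeriv (polyExp 1 (halfLaguerre n)) c = 0)
    (hne : polyExp 1 (halfLaguerre n) c ≠ 0) : 1 ≤ polyExp 1 (halfLaguerre n) c ^ 2 := by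
  have hode := polyExp_one_halfLaguerre_ode n
  have hcR := lt_of_smoothDeriv_eq_zero (by positivity) hode (tendsto_polyExp_zero one_pos _) hc hne
  have hle := sq_apply_zero_le_of_smoothDeriv_eq_zero hode hc0 hcR hc
  simpa [polyExp_apply, eval_zero_halfLaguerre] using hle

theorem exists_alternant_polyExp_halfLaguerre (n : ℕ) :
    ∃ z : Fin (n + 1) → ℝ, StrictMono z ∧ (∀ i, 0 ≤ z i) ∧
      ∀ i : Fin (n + 1), 1 ≤ (-1) ^ (i : ℕ) * polyExp 1 (halfLaguerre n) (z i) := by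
  obtain ⟨x, hx, hxpos, hroot⟩ := exists_zeros_halfLaguerre n
  set f := polyExp 1 (halfLaguerre n) with hf
  have hzero (i) : f (x i) = 0 := by rw [hf, polyExp_apply, hroot, zero_mul]
  have hf0 : f 0 = 1 := by simp [hf, polyExp_apply, eval_zero_halfLaguerre]
  obtain ⟨y, hy, hderiv, hxy, hyx⟩ := exists_interlacing_deriv_zeros (smoothFun.continuous f)
    (tendsto_polyExp_zero one_pos _) hx hzero
  have hypos (i) : 0 < y i := (hxpos i).trans (hxy i)
  have hker : diffOp (1 ::ₘ .replicate n 1) f = 0 := by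
    rw [← Multiset.replicate_succ]
    exact diffOp_polyExp_halfLaguerre n 1
  have hsign (i : Fin n) : 0 < (-1) ^ (i.succ : ℕ) * f (y i) := by
    refine alternating_pos_of_zeros (Multiset.card_replicate n 1) hker hzero (i := 0) (x := 0)
      ((Fin.strictMono_insertNth_iff _ _ _).2 ⟨hx, fun j hj => by simp at hj, fun j _ => hxpos j⟩)
      ((Fin.strictMono_insertNth_iff _ _ _).2 ⟨hx, fun j hj => ?_, fun j hj => ?_⟩) (by simp [hf0])
    · exact (hx.monotone (Fin.castSucc_lt_succ_iff.1 hj)).trans_lt (hxy i)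
    · exact hyx i j (Fin.succ_le_castSucc_iff.1 hj)
  refine ⟨Fin.cons 0 y, Fin.strictMono_cons.2 ⟨hypos, hy⟩, Fin.cases le_rfl fun i => (hypos i).le,
    Fin.cases (by simp [hf0]) fun i => ?_⟩
  have hne : f (y i) ≠ 0 := fun h => by simpa [h] using hsign i
  have hsq := one_le_sq_polyExp_halfLaguerre_of_smoothDeriv_eq_zero n (hypos i).le (hderiv i) hne
  rw [Fin.cons_succ, ← one_le_sq_iff₀ (hsign i).le, mul_pow, pow_right_comm, neg_one_sq,
    one_pow, one_mul]
  exact hsq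

theorem smoothDeriv_pow_polyExp (k : ℕ) (a : ℝ) (q : ℝ[X]) :
    (smoothDeriv ^ k) (polyExp a q) =
      polyExp a ((((derivative : Module.End ℝ ℝ[X]) + algebraMap ℝ _ (-a)) ^ k) q) := by
  induction k with
  | zero => rfl
  | succ k ih =>
    rw [pow_succ', Module.End.mul_apply, ih, smoothDeriv_polyExp, pow_succ', Module.End.mul_apply]
    simp [sub_eq_add_neg]

theorem smoothDeriv_pow_polyExp_apply_zero (k : ℕ) (a : ℝ) (q : ℝ[X]) :
    (smoothDeriv ^ k) (polyExp a q) 0 =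
      ∑ j ∈ Finset.range (k + 1), (-a) ^ (k - j) * k.choose j * (j.factorial * q.coeff j) := by
  have hcomm := (Algebra.commutes (-a) (derivative : Module.End ℝ ℝ[X])).symm
  rw [smoothDeriv_pow_polyExp, Commute.add_pow hcomm, polyExp_apply, mul_zero, Real.exp_zero,
    mul_one, LinearMap.sum_apply, eval_finsetSum]
  refine Finset.sum_congr rfl fun j _ => ?_
  have hcoeff : (derivative^[j] q).coeff 0 = j.factorial * q.coeff j := by
    rw [coeff_iterate_derivative, zero_add, Nat.descFactorial_self, nsmul_eq_mul]
  rw [← hcoeff, ← map_pow, ← map_natCast (algebraMap ℝ (Module.End ℝ ℝ[X])), mul_assoc, ← map_mul,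
    ← Algebra.commutes, Module.End.mul_apply, Module.algebraMap_end_apply, eval_smul,
    Module.End.pow_apply, coeff_zero_eq_eval_zero, smul_eq_mul]

theorem smoothDeriv_pow_polyExp_halfLaguerre_apply_zero (n k : ℕ) :
    (-1) ^ k * (smoothDeriv ^ k) (polyExp 1 (halfLaguerre n)) 0 =
      ∑ j ∈ Finset.range (k + 1), (8 : ℝ) ^ j * n.choose j * k.choose j / (2 * j).choose j := by
  rw [smoothDeriv_pow_polyExp_apply_zero, Finset.mul_sum]
  refine Finset.sum_congr rfl fun j hj => ?_
  obtain ⟨m, rfl⟩ := Nat.exists_eq_add_of_le (Finset.mem_range_succ_iff.1 hj)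
  have hchoose : ((2 * j).choose j : ℝ) ≠ 0 := by
    exact_mod_cast (Nat.choose_pos (by omega)).ne'
  have hsign : (-1 : ℝ) ^ (j + m) * (-1) ^ m * (-8) ^ j = 8 ^ j := by
    rw [pow_add, mul_assoc ((-1 : ℝ) ^ j), ← mul_pow, mul_right_comm, ← mul_pow]
    norm_num
  rw [coeff_halfLaguerre, halfLaguerreCoeff, Nat.centralBinom_eq_two_mul_choose,
    Nat.add_sub_cancel_left]
  field_simp
  rw [← hsign]
  ring

end Extremal

section UniformBound

theorem abs_iteratedDeriv_le_of_diffOp_eq_zero {n : ℕ} (k : ℕ) {s : Multiset ℝ}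
    (hs : s.card = n + 1) (hpos : ∀ a ∈ s, 0 < a) (hle : ∀ a ∈ s, a ≤ 1) {f : smoothFun}
    (hf : diffOp s f = 0) {t M : ℝ} (hM : ∀ x ≥ t, |f x| ≤ M) :
    |iteratedDeriv k f t| ≤
      (∑ j ∈ Finset.range (k + 1), (8 : ℝ) ^ j * n.choose j * k.choose j / (2 * j).choose j) *
        M := by
  obtain ⟨z, hz, hz0, halt⟩ := exists_alternant_polyExp_halfLaguerre n
  have hbound := abs_smoothDeriv_pow_le_of_alternant (g := smoothTranslate t f) k hs hpos hle
    (diffOp_polyExp_halfLaguerre n 1) (by rw [diffOp_smoothTranslate, hf]; rfl) hz hz0 halt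
    fun i => hM _ (le_add_of_nonneg_left (hz0 i))
  rw [smoothDeriv_pow_polyExp_halfLaguerre_apply_zero, smoothDeriv_pow_apply] at hbound
  simpa [smoothTranslate, iteratedDeriv_comp_add_const] using hbound

theorem exists_smoothFun_of_mem_expPoly {d : ℕ} {h : Fin d → ℝ} {p : ℝ → ℝ}
    (hp : p ∈ expPoly d h) :
    ∃ f : smoothFun, ⇑f = p ∧ diffOp (Finset.univ.val.map h) f = 0 := by
  obtain ⟨c, hc⟩ := hp
  refine ⟨∑ i, polyExp (h i)
    (monomial (Nat.card {j : Fin d // j < i ∧ h j = h i}) (c i)), ?_, ?_⟩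
  · ext t
    simp [hc, polyExp_apply]
  · rw [map_sum]
    refine Finset.sum_eq_zero fun i _ => diffOp_polyExp_eq_zero
      ((degree_monomial_le _ _).trans_lt (Nat.cast_lt.2 ?_))
    rw [Multiset.count_map, ← Finset.filter_val, Finset.card_val, Nat.card_eq_fintype_card,
      Fintype.card_subtype]
    refine Finset.card_lt_card ((Finset.ssubset_iff_of_subset fun j hj => ?_).2 ⟨i, ?_, ?_⟩)
    · simpa using (Finset.mem_filter.1 hj).2.2.symm
    · simp
    · simp

end UniformBound

end MarkovBernstein

/-- Explicit uniform Markov–Bernstein bound: for `0 < h₁ ≤ ⋯ ≤ h_d ≤ 1` and `p ∈ P_h`,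
`sup_{t ≥ 0} |p⁽ᵏ⁾(t)| ≤ (Σ_{j=0}^{k} 8ʲ C(d−1,j) C(k,j) / C(2j,j)) · sup_{t ≥ 0} |p(t)|`. -/
theorem markov_bernstein_explicit (d k : ℕ) (hd : 1 ≤ d) (hk : 1 ≤ k)
    (h : Fin d → ℝ) (hmono : Monotone h) (hpos : ∀ i, 0 < h i) (hone : ∀ i, h i ≤ 1)
    (p : ℝ → ℝ) (hp : p ∈ expPoly d h) :
    ∀ t : ℝ, 0 ≤ t →
      |iteratedDeriv k p t| ≤
        (∑ j ∈ Finset.range (k + 1),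
            (8 : ℝ) ^ j * ((d - 1).choose j : ℝ) * (k.choose j : ℝ) / ((2 * j).choose j : ℝ))
          * supAbs p := by
  intro t ht
  obtain ⟨n, rfl⟩ := Nat.exists_eq_add_of_le' hd
  obtain ⟨f, rfl, hf⟩ := MarkovBernstein.exists_smoothFun_of_mem_expPoly hp
  have hpos' : ∀ a ∈ Finset.univ.val.map h, 0 < a :=
    Multiset.forall_mem_map_iff.2 fun i _ => hpos i
  have hone' : ∀ a ∈ Finset.univ.val.map h, a ≤ 1 :=
    Multiset.forall_mem_map_iff.2 fun i _ => hone i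
  have hbdd : BddAbove ((fun x => |f x|) '' Set.Ici 0) :=
    MarkovBernstein.bddAbove_abs_image_Ici_of_tendsto_zero (MarkovBernstein.smoothFun.continuous f)
      (MarkovBernstein.tendsto_zero_of_diffOp_eq_zero hpos' hf) 0
  exact MarkovBernstein.abs_iteratedDeriv_le_of_diffOp_eq_zero k (by simp) hpos' hone' hf
    fun x hx => le_csSup hbdd ⟨x, ht.trans hx, rfl⟩
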